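/- Let d ≥ 1 and let u, v ∈ ℝ^d be unit vectors. If g is a standard Gaussian random vector on ℝ^d (its law is the product over Fin d of the one-dimensional Gaussian measure with mean 0 and variance 1), then the probability of the event ⟨g, u⟩ · ⟨g, v⟩ < 0 equals arccos(⟨u, v⟩)/π. -/

import Mathlib

open MeasureTheory ProbabilityTheory

/-!
The joint law of `(⟪g, u⟫, ⟪g, v⟫)` depends only on `‖u‖`, `‖v‖` and `⟪u, v⟫`, so `u` and `v` may be
replaced by two complex numbers making the same angle `θ`. The argument of a standard Gaussian
complex number is uniform, and the signs of the two inner products are `+, -` exactly when that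
argument lies in an interval of length `θ`, which has probability `θ / (2π)`. Exchanging `u` and `v`
accounts for the signs `-, +`.
-/

open Complex Set InnerProductGeometry
open scoped ENNReal Real RealInnerProductSpace

lemma map_arg_withDensity_comp_norm {f : ℝ → ℝ≥0∞} (hf : Measurable f) :
    (volume.withDensity fun z : ℂ ↦ f ‖z‖).map arg =
      (∫⁻ r in Ioi 0, ENNReal.ofReal r * f r) • volume.restrict (Ioo (-π) π) := by
  ext s hs
  have integrand_polar : ∀ p ∈ polarCoord.target,
      ENNReal.ofReal p.1 • (arg ⁻¹' s).indicator (fun z ↦ f ‖z‖) (Complex.polarCoord.symm p) =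
        ENNReal.ofReal p.1 * f p.1 * s.indicator 1 p.2 := by
    rintro ⟨r, φ⟩ ⟨hr, hφ⟩
    have arg_eq : arg (Complex.polarCoord.symm (r, φ)) = φ := by
      rw [Complex.polarCoord_symm_apply, ofReal_cos, ofReal_sin]
      exact arg_mul_cos_add_sin_mul_I hr (Ioo_subset_Ioc_self hφ)
    have norm_eq : ‖Complex.polarCoord.symm (r, φ)‖ = r := by
      rw [norm_polarCoord_symm, abs_of_pos hr]
    by_cases h : φ ∈ s <;> simp only [indicator, mem_preimage, arg_eq, norm_eq, h] <;> simp
  rw [Measure.map_apply measurable_arg hs, withDensity_apply _ (measurable_arg hs),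
    ← lintegral_indicator (measurable_arg hs), ← Complex.lintegral_comp_polarCoord_symm,
    setLIntegral_congr_fun polarCoord.open_target.measurableSet integrand_polar,
    polarCoord_target, Measure.volume_eq_prod, ← Measure.prod_restrict,
    lintegral_prod_mul (f := fun r ↦ ENNReal.ofReal r * f r) (by fun_prop)
      (measurable_one.indicator hs).aemeasurable,
    lintegral_indicator_one hs, Measure.smul_apply, smul_eq_mul]

lemma map_prod_gaussianReal_eq_stdGaussian_complex :
    ((gaussianReal 0 1).prod (gaussianReal 0 1)).map measurableEquivRealProd.symm =
      stdGaussian ℂ := by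
  rw [stdGaussian_eq_map_pi_orthonormalBasis orthonormalBasisOneI,
    ← (measurePreserving_finTwoArrow (gaussianReal 0 1)).map_eq,
    Measure.map_map (by fun_prop) (by fun_prop)]
  congr 1
  ext x
  simp [Fin.sum_univ_two, MeasurableEquiv.finTwoArrow, Complex.ext_iff]

lemma gaussianPDF_mul_gaussianPDF_eq (x y : ℝ) :
    gaussianPDF 0 1 x * gaussianPDF 0 1 y =
      ENNReal.ofReal ((2 * π)⁻¹ * Real.exp (-(x ^ 2 + y ^ 2) / 2)) := by
  have sqrt_mul_sqrt : (√(2 * π))⁻¹ * (√(2 * π))⁻¹ = (2 * π)⁻¹ := by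
    rw [← mul_inv, Real.mul_self_sqrt (by positivity)]
  rw [gaussianPDF, gaussianPDF, ← ENNReal.ofReal_mul (gaussianPDFReal_nonneg 0 1 x)]
  simp only [gaussianPDFReal, NNReal.coe_one, mul_one, sub_zero]
  rw [mul_mul_mul_comm, sqrt_mul_sqrt, ← Real.exp_add]
  ring_nf

lemma stdGaussian_complex_eq_withDensity :
    stdGaussian ℂ =
      volume.withDensity fun z ↦ ENNReal.ofReal ((2 * π)⁻¹ * Real.exp (-‖z‖ ^ 2 / 2)) := by
  ext s hs
  rw [← map_prod_gaussianReal_eq_stdGaussian_complex,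
    gaussianReal_of_var_ne_zero 0 one_ne_zero,
    prod_withDensity (measurable_gaussianPDF 0 1) (measurable_gaussianPDF 0 1),
    ← Measure.volume_eq_prod, Measure.map_apply (by fun_prop) hs,
    withDensity_apply _ (measurableEquivRealProd.symm.measurable hs), withDensity_apply _ hs,
    ← volume_preserving_equiv_real_prod.symm.setLIntegral_comp_preimage_emb
      measurableEquivRealProd.symm.measurableEmbedding]
  simp only [gaussianPDF_mul_gaussianPDF_eq, Complex.sq_norm, normSq_apply, ← sq,
    measurableEquivRealProd_symm_apply]

lemma map_arg_stdGaussian_complex :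
    (stdGaussian ℂ).map arg = (ENNReal.ofReal (2 * π))⁻¹ • volume.restrict (Ioo (-π) π) := by
  obtain ⟨c, map_arg⟩ : ∃ c : ℝ≥0∞,
      (stdGaussian ℂ).map arg = c • volume.restrict (Ioo (-π) π) := by
    rw [stdGaussian_complex_eq_withDensity]
    exact ⟨_, map_arg_withDensity_comp_norm
      (f := fun r ↦ ENNReal.ofReal ((2 * π)⁻¹ * Real.exp (-r ^ 2 / 2))) (by fun_prop)⟩
  -- The radial integral need not be evaluated: the total mass determines it.
  have total_mass : c * ENNReal.ofReal (2 * π) = 1 := by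
    have := congrArg (· univ) map_arg
    simpa [Measure.map_apply measurable_arg, ← two_mul] using this.symm
  rw [map_arg, ENNReal.eq_inv_of_mul_eq_one_left total_mass]

lemma ae_ne_zero_stdGaussian_complex : ∀ᵐ z ∂stdGaussian ℂ, z ≠ 0 := by
  rw [stdGaussian_complex_eq_withDensity]
  exact withDensity_absolutelyContinuous _ _ (Measure.ae_ne volume 0)

lemma inner_mul_exp_mul_I_mul_exp_mul_I (r s α β : ℝ) :
    ⟪(r * exp (α * I) : ℂ), s * exp (β * I)⟫ = r * s * Real.cos (β - α) := by
  have mul_conj_eq : (s * exp (β * I) : ℂ) * (starRingEnd ℂ) (r * exp (α * I)) =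
      (r * s : ℝ) * exp ((β - α : ℝ) * I) := by
    rw [map_mul, ← exp_conj, map_mul, conj_ofReal, conj_ofReal, conj_I, mul_mul_mul_comm,
      ← Complex.exp_add]
    push_cast
    ring_nf
  rw [Complex.inner, mul_conj_eq, re_ofReal_mul, exp_ofReal_mul_I_re]

lemma inner_mul_exp_mul_I (z : ℂ) (r α : ℝ) :
    ⟪z, r * exp (α * I)⟫ = r * (‖z‖ * Real.cos (arg z - α)) := by
  conv_lhs => rw [← norm_mul_exp_arg_mul_I z]
  rw [inner_mul_exp_mul_I_mul_exp_mul_I, ← Real.cos_neg, neg_sub, mul_comm ‖z‖, mul_assoc]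

lemma sin_add_pos_and_sin_sub_neg_iff {a φ : ℝ} (ha : a ∈ Icc 0 (π / 2)) (hφ : φ ∈ Ioc (-π) π) :
    0 < Real.sin (φ + a) ∧ Real.sin (φ - a) < 0 ↔ φ ∈ Ioo (-a) a := by
  obtain ⟨ha0, ha1⟩ := ha
  obtain ⟨hφ0, hφ1⟩ := hφ
  constructor
  · rintro ⟨hpos, hneg⟩
    constructor
    · contrapose! hpos
      exact Real.sin_nonpos_of_nonpos_of_neg_pi_le (by linarith) (by linarith)
    · contrapose! hneg
      exact Real.sin_nonneg_of_nonneg_of_le_pi (by linarith) (by linarith)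
  · rintro ⟨hl, hr⟩
    exact ⟨Real.sin_pos_of_pos_of_lt_pi (by linarith) (by linarith),
      Real.sin_neg_of_neg_of_neg_pi_lt (by linarith) (by linarith)⟩

lemma stdGaussian_complex_arg_mem_Ioo {a : ℝ} (ha : a ≤ π) :
    stdGaussian ℂ {z | arg z ∈ Ioo (-a) a} = ENNReal.ofReal (a / π) := by
  have Ioo_subset : Ioo (-a) a ⊆ Ioo (-π) π := Ioo_subset_Ioo (neg_le_neg ha) ha
  have h := congrArg (· (Ioo (-a) a)) map_arg_stdGaussian_complex
  simp only [Measure.map_apply measurable_arg measurableSet_Ioo, Measure.smul_apply,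
    Measure.restrict_apply measurableSet_Ioo, inter_eq_self_of_subset_left Ioo_subset,
    Real.volume_Ioo, smul_eq_mul] at h
  refine h.trans ?_
  rw [← ENNReal.ofReal_inv_of_pos (by positivity), ← ENNReal.ofReal_mul (by positivity)]
  congr 1
  field_simp
  ring

lemma stdGaussian_complex_inner_pos_inner_neg {r s a : ℝ} (hr : 0 < r) (hs : 0 < s)
    (ha : a ∈ Icc 0 (π / 2)) :
    stdGaussian ℂ {z | 0 < ⟪z, r * exp ((π / 2 - a : ℝ) * I)⟫ ∧
      ⟪z, s * exp ((π / 2 + a : ℝ) * I)⟫ < 0} = ENNReal.ofReal (a / π) := by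
  rw [← stdGaussian_complex_arg_mem_Ioo (ha.2.trans (half_le_self Real.pi_nonneg))]
  -- The apex is in the right-hand event only, because `arg 0 = 0`.
  refine measure_congr (Filter.eventuallyEq_set.2 ?_)
  filter_upwards [ae_ne_zero_stdGaussian_complex] with z hz
  rw [← norm_pos_iff] at hz
  have cos_left : Real.cos (arg z - (π / 2 - a)) = Real.sin (arg z + a) := by
    rw [← Real.cos_sub_pi_div_two]; ring_nf
  have cos_right : Real.cos (arg z - (π / 2 + a)) = Real.sin (arg z - a) := by
    rw [← Real.cos_sub_pi_div_two]; ring_nf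
  rw [inner_mul_exp_mul_I, inner_mul_exp_mul_I, cos_left, cos_right,
    mul_pos_iff_of_pos_left hr, mul_pos_iff_of_pos_left hz, ← smul_eq_mul s,
    smul_neg_iff_of_pos_left hs, ← smul_eq_mul ‖z‖, smul_neg_iff_of_pos_left hz]
  exact sin_add_pos_and_sin_sub_neg_iff ha (arg_mem_Ioc z)

section StdGaussian

variable {E F : Type*} [NormedAddCommGroup E] [InnerProductSpace ℝ E] [FiniteDimensional ℝ E]
  [MeasurableSpace E] [BorelSpace E] [NormedAddCommGroup F] [InnerProductSpace ℝ F]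
  [FiniteDimensional ℝ F] [MeasurableSpace F] [BorelSpace F]

lemma charFunDual_map_inner_prodMk_stdGaussian (u v : E) (L : StrongDual ℝ (ℝ × ℝ)) :
    charFunDual ((stdGaussian E).map fun g ↦ (⟪g, u⟫, ⟪g, v⟫)) L =
      cexp (-‖L (1, 0) • u + L (0, 1) • v‖ ^ 2 / 2) := by
  have L_eq_inner (g : E) : L (⟪g, u⟫, ⟪g, v⟫) = ⟪g, L (1, 0) • u + L (0, 1) • v⟫ := by
    have : (⟪g, u⟫, ⟪g, v⟫) = ⟪g, u⟫ • ((1, 0) : ℝ × ℝ) + ⟪g, v⟫ • (0, 1) := by simp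
    rw [this, map_add, map_smul, map_smul, inner_add_right, inner_smul_right, inner_smul_right,
      smul_eq_mul, smul_eq_mul, mul_comm, mul_comm ⟪g, v⟫]
  rw [← charFun_stdGaussian, charFunDual_apply, charFun_apply,
    integral_map (by fun_prop) (by fun_prop)]
  simp only [L_eq_inner]

lemma map_inner_prodMk_stdGaussian_congr {u v : E} {u' v' : F} (hu : ‖u‖ = ‖u'‖)
    (hv : ‖v‖ = ‖v'‖) (huv : ⟪u, v⟫ = ⟪u', v'⟫) :
    (stdGaussian E).map (fun g ↦ (⟪g, u⟫, ⟪g, v⟫)) =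
      (stdGaussian F).map fun g ↦ (⟪g, u'⟫, ⟪g, v'⟫) := by
  have := Measure.isProbabilityMeasure_map (μ := stdGaussian E)
    (f := fun g ↦ (⟪g, u⟫, ⟪g, v⟫)) (by fun_prop)
  have := Measure.isProbabilityMeasure_map (μ := stdGaussian F)
    (f := fun g ↦ (⟪g, u'⟫, ⟪g, v'⟫)) (by fun_prop)
  refine Measure.ext_of_charFunDual (funext fun L ↦ ?_)
  have norm_sq_eq : ‖L (1, 0) • u + L (0, 1) • v‖ ^ 2 = ‖L (1, 0) • u' + L (0, 1) • v'‖ ^ 2 := by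
    simp only [norm_add_sq_real, norm_smul, inner_smul_left, inner_smul_right, hu, hv, huv]
  rw [charFunDual_map_inner_prodMk_stdGaussian, charFunDual_map_inner_prodMk_stdGaussian]
  exact_mod_cast congrArg (fun t : ℝ ↦ cexp (-t / 2)) norm_sq_eq

lemma stdGaussian_inner_pos_inner_neg {u v : E} (hu : u ≠ 0) (hv : v ≠ 0) :
    stdGaussian E {g | 0 < ⟪g, u⟫ ∧ ⟪g, v⟫ < 0} = ENNReal.ofReal (angle u v / (2 * π)) := by
  set a := angle u v / 2 with ha
  have ha_mem : a ∈ Icc 0 (π / 2) :=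
    ⟨by linarith [angle_nonneg u v], by linarith [angle_le_pi u v]⟩
  -- With these phases the wedge is symmetric about the positive real axis.
  set u' : ℂ := ‖u‖ * exp ((π / 2 - a : ℝ) * I)
  set v' : ℂ := ‖v‖ * exp ((π / 2 + a : ℝ) * I)
  have norm_polar (x : E) (α : ℝ) : ‖x‖ = ‖(‖x‖ * exp (α * I) : ℂ)‖ := by
    rw [norm_mul, norm_exp_ofReal_mul_I, mul_one, norm_real, norm_norm]
  have inner_eq : ⟪u, v⟫ = ⟪u', v'⟫ := by
    have sub_eq : π / 2 + a - (π / 2 - a) = angle u v := by rw [ha]; ring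
    rw [inner_mul_exp_mul_I_mul_exp_mul_I, sub_eq, mul_comm, cos_angle_mul_norm_mul_norm]
  have law_eq := map_inner_prodMk_stdGaussian_congr (norm_polar u _) (norm_polar v _) inner_eq
  have measurableSet_quadrant : MeasurableSet (Ioi (0 : ℝ) ×ˢ Iio (0 : ℝ)) :=
    measurableSet_Ioi.prod measurableSet_Iio
  calc stdGaussian E {g | 0 < ⟪g, u⟫ ∧ ⟪g, v⟫ < 0}
      = (stdGaussian E).map (fun g ↦ (⟪g, u⟫, ⟪g, v⟫)) (Ioi 0 ×ˢ Iio 0) := by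
        rw [Measure.map_apply (by fun_prop) measurableSet_quadrant]; rfl
    _ = stdGaussian ℂ {z | 0 < ⟪z, u'⟫ ∧ ⟪z, v'⟫ < 0} := by
        rw [law_eq, Measure.map_apply (by fun_prop) measurableSet_quadrant]; rfl
    _ = ENNReal.ofReal (a / π) :=
        stdGaussian_complex_inner_pos_inner_neg (norm_pos_iff.2 hu) (norm_pos_iff.2 hv) ha_mem
    _ = ENNReal.ofReal (angle u v / (2 * π)) := by rw [ha, div_div]

theorem gaussian_hyperplane_cut_probability_general {u v : E} (hu : u ≠ 0) (hv : v ≠ 0) :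
    stdGaussian E {g | ⟪g, u⟫ * ⟪g, v⟫ < 0} = ENNReal.ofReal (angle u v / π) := by
  have cut_eq_union : {g : E | ⟪g, u⟫ * ⟪g, v⟫ < 0} =
      {g | 0 < ⟪g, u⟫ ∧ ⟪g, v⟫ < 0} ∪ {g | 0 < ⟪g, v⟫ ∧ ⟪g, u⟫ < 0} := by
    ext g
    simp only [mem_ofPred_eq, mem_union, mul_neg_iff, and_comm]
  have disjoint_wedges : Disjoint {g : E | 0 < ⟪g, u⟫ ∧ ⟪g, v⟫ < 0}
      {g | 0 < ⟪g, v⟫ ∧ ⟪g, u⟫ < 0} :=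
    disjoint_left.2 fun _ h h' ↦ h.1.not_gt h'.2
  rw [cut_eq_union, measure_union disjoint_wedges (by measurability),
    stdGaussian_inner_pos_inner_neg hu hv, stdGaussian_inner_pos_inner_neg hv hu, angle_comm v u,
    ← ENNReal.ofReal_add (by have := angle_nonneg u v; positivity)
      (by have := angle_nonneg u v; positivity)]
  congr 1
  field_simp
  ring

end StdGaussian

section EuclideanSpace

variable {ι : Type*} [Fintype ι]

lemma real_inner_toLp_toLp (x y : ι → ℝ) :
    ⟪WithLp.toLp 2 x, WithLp.toLp 2 y⟫ = ∑ j, x j * y j := by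
  simp only [EuclideanSpace.inner_toLp_toLp, star_trivial, dotProduct, mul_comm]

lemma norm_toLp_eq_one {x : ι → ℝ} (hx : ∑ j, x j * x j = 1) : ‖WithLp.toLp 2 x‖ = 1 := by
  rw [norm_eq_sqrt_real_inner, real_inner_toLp_toLp, hx, Real.sqrt_one]

lemma toLp_ne_zero_of_sum_mul_self_eq_one {x : ι → ℝ} (hx : ∑ j, x j * x j = 1) :
    WithLp.toLp 2 x ≠ 0 :=
  norm_ne_zero_iff.1 (norm_toLp_eq_one hx ▸ one_ne_zero)

lemma angle_toLp_toLp {x y : ι → ℝ} (hx : ∑ j, x j * x j = 1) (hy : ∑ j, y j * y j = 1) :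
    angle (WithLp.toLp 2 x) (WithLp.toLp 2 y) = Real.arccos (∑ j, x j * y j) := by
  rw [angle, norm_toLp_eq_one hx, norm_toLp_eq_one hy, mul_one, div_one, real_inner_toLp_toLp]

lemma pi_gaussianReal_sum_mul_sum_neg (x y : ι → ℝ) :
    (Measure.pi fun _ : ι ↦ gaussianReal 0 1) {g | (∑ j, g j * x j) * (∑ j, g j * y j) < 0} =
      stdGaussian (EuclideanSpace ℝ ι)
        {g | ⟪g, WithLp.toLp 2 x⟫ * ⟪g, WithLp.toLp 2 y⟫ < 0} := by
  rw [← map_pi_eq_stdGaussian, Measure.map_apply (by fun_prop) (by measurability)]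
  simp only [preimage_ofPred_eq, real_inner_toLp_toLp]

end EuclideanSpace

/-- For unit vectors `u, v ∈ ℝ^d` and a standard Gaussian vector `g`,
the probability that `⟨g,u⟩ ⋅ ⟨g,v⟩ < 0` equals `arccos ⟨u,v⟩ / π`. -/
theorem gaussian_hyperplane_cut_probability (d : ℕ) (hd : 1 ≤ d)
    (u v : Fin d → ℝ) (hu : ∑ j, u j * u j = 1) (hv : ∑ j, v j * v j = 1) :
    (Measure.pi fun _ : Fin d => gaussianReal 0 1)
        {g | (∑ j, g j * u j) * (∑ j, g j * v j) < 0} =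
      ENNReal.ofReal (Real.arccos (∑ j, u j * v j) / Real.pi) := by
  rw [pi_gaussianReal_sum_mul_sum_neg, ← angle_toLp_toLp hu hv]
  exact gaussian_hyperplane_cut_probability_general (toLp_ne_zero_of_sum_mul_self_eq_one hu)
    (toLp_ne_zero_of_sum_mul_self_eq_one hv)
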